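/- arXiv:0812.0047 — 2 statements merged into one kernel-verified Lean document; each statement's English description precedes it below -/
import Mathlib

section
/- Every natural number is expressible as a sum of three triangular numbers t_a + t_b + t_c with a, b, c ≥ 0 (Gauss's theorem, used in the paper to describe the vertex set of the associated graph). -/
/-- Shift an integer into a symmetric residue interval. -/
lemma exists_shift (a b : ℤ) (ha : 0 < a) : ∃ t : ℤ, 4 * (b + t * a) ^ 2 ≤ a ^ 2 := by
  refine ⟨-((2 * b + a) / (2 * a)), ?_⟩
  have h1 := Int.emod_add_mul_ediv (2 * b + a) (2 * a)
  have h2 := Int.emod_nonneg (2 * b + a) (b := 2 * a) (by omega)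
  have h3 := Int.emod_lt_of_pos (2 * b + a) (b := 2 * a) (by omega)
  set q := (2 * b + a) / (2 * a)
  set r := (2 * b + a) % (2 * a)
  have h4 : 2 * (b + -q * a) = r - a := by linear_combination -h1
  have h5 : 4 * (b + -q * a) ^ 2 = (r - a) ^ 2 := by rw [← h4]; ring
  rw [h5]
  nlinarith

/-- Reduction of positive definite binary forms. -/
lemma binary_reduction (k : ℕ) : ∀ A B C D : ℤ, A.toNat = k → 0 < A → A * C - B ^ 2 = D → 0 < D →
    ∃ p q r s : ℤ, p * s - q * r = 1 ∧ 0 < A * p ^ 2 + 2 * B * p * r + C * r ^ 2 ∧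
      3 * (A * p ^ 2 + 2 * B * p * r + C * r ^ 2) ^ 2 ≤ 4 * D := by
  induction k using Nat.strong_induction_on with
  | _ k ih =>
    intro A B C D hk hA hD hDp
    obtain ⟨t, ht⟩ := exists_shift A B hA
    have hC : A * (C + 2 * t * B + t ^ 2 * A) = D + (B + t * A) ^ 2 := by
      linear_combination hD
    by_cases hlt : C + 2 * t * B + t ^ 2 * A < A
    · have hpos : 0 < C + 2 * t * B + t ^ 2 * A := by
        have : 0 < A * (C + 2 * t * B + t ^ 2 * A) := by rw [hC]; positivity
        exact pos_of_mul_pos_right this hA.le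
      obtain ⟨p, q, r, s, h1, h2, h3⟩ := ih (C + 2 * t * B + t ^ 2 * A).toNat (by omega)
        (C + 2 * t * B + t ^ 2 * A) (-(B + t * A)) A D rfl hpos (by linear_combination hD) hDp
      have e : A * (-r + t * p) ^ 2 + 2 * B * (-r + t * p) * p + C * p ^ 2 =
        (C + 2 * t * B + t ^ 2 * A) * p ^ 2 + 2 * (-(B + t * A)) * p * r + A * r ^ 2 := by ring
      refine ⟨-r + t * p, -s + t * q, p, q, by linear_combination h1, ?_, ?_⟩
      · rw [e]; exact h2
      · rw [e]; exact h3
    · refine ⟨1, 0, 0, 1, by ring, by linarith, ?_⟩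
      have : A * A ≤ A * (C + 2 * t * B + t ^ 2 * A) :=
        mul_le_mul_of_nonneg_left (not_lt.mp hlt) hA.le
      nlinarith

/-- Binary forms of determinant one are sums of two squares. -/
lemma binary_unimodular (A B C : ℤ) (hA : 0 < A) (hD : A * C - B ^ 2 = 1) (y z : ℤ) :
    ∃ u v : ℤ, A * y ^ 2 + 2 * B * y * z + C * z ^ 2 = u ^ 2 + v ^ 2 := by
  obtain ⟨p, q, r, s, h1, h2, h3⟩ := binary_reduction _ A B C 1 rfl hA hD one_pos
  have hA' : A * p ^ 2 + 2 * B * p * r + C * r ^ 2 = 1 := by nlinarith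
  obtain ⟨Y, hY⟩ : ∃ Y, Y = s * y - q * z := ⟨_, rfl⟩
  obtain ⟨Z, hZ⟩ : ∃ Z, Z = -r * y + p * z := ⟨_, rfl⟩
  have hy : y = p * Y + q * Z := by rw [hY, hZ]; linear_combination (-y) * h1
  have hz : z = r * Y + s * Z := by rw [hY, hZ]; linear_combination (-z) * h1
  clear hY hZ
  subst hy hz
  obtain ⟨B', hB'⟩ : ∃ B', B' = A * p * q + B * (p * s + q * r) + C * r * s := ⟨_, rfl⟩
  have hC' : A * q ^ 2 + 2 * B * q * s + C * s ^ 2 = 1 + B' ^ 2 := by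
    have : (A * p ^ 2 + 2 * B * p * r + C * r ^ 2) * (A * q ^ 2 + 2 * B * q * s + C * s ^ 2)
        - B' ^ 2 = 1 := by
      rw [hB']
      linear_combination (p * s - q * r) ^ 2 * hD + (p * s - q * r + 1) * h1
    rw [hA'] at this
    linarith
  refine ⟨Y + B' * Z, Z, ?_⟩
  linear_combination Y ^ 2 * hA' - 2 * Y * Z * hB' + hC' * Z ^ 2

/-- Positive definite ternary forms of determinant one take values that are sums of three squares. -/
lemma ternary_unimodular (k : ℕ) : ∀ a b c d e f : ℤ, a.toNat = k → 0 < a → 0 < a * b - d ^ 2 →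
    a * b * c + 2 * d * e * f - a * f ^ 2 - b * e ^ 2 - c * d ^ 2 = 1 → ∀ x y z : ℤ,
    ∃ u v w : ℤ, a * x ^ 2 + b * y ^ 2 + c * z ^ 2 + 2 * d * x * y + 2 * e * x * z + 2 * f * y * z
      = u ^ 2 + v ^ 2 + w ^ 2 := by
  induction k using Nat.strong_induction_on with
  | _ k ih =>
    intro a b c d e f hk ha hab hdet x y z
    have hG : (a * b - d ^ 2) * (a * c - e ^ 2) - (a * f - d * e) ^ 2 = a := by
      linear_combination a * hdet
    by_cases ha1 : a = 1
    · subst ha1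
      obtain ⟨v, w, hvw⟩ := binary_unimodular _ _ _ hab hG y z
      exact ⟨x + d * y + e * z, v, w, by linear_combination hvw⟩
    obtain ⟨p, q, r, s, h1, h2, h3⟩ := binary_reduction _ _ _ _ _ rfl hab hG ha
    obtain ⟨A, hA⟩ : ∃ A, A = (a * b - d ^ 2) * p ^ 2 + 2 * (a * f - d * e) * p * r
      + (a * c - e ^ 2) * r ^ 2 := ⟨_, rfl⟩
    rw [← hA] at h2 h3
    obtain ⟨t, ht⟩ := exists_shift a (d * p + e * r) ha
    obtain ⟨d', hd'⟩ : ∃ d', d' = d * p + e * r + t * a := ⟨_, rfl⟩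
    obtain ⟨b', hb'⟩ : ∃ b', b' = b * p ^ 2 + 2 * f * p * r + c * r ^ 2
      + 2 * t * (d * p + e * r) + t ^ 2 * a := ⟨_, rfl⟩
    rw [← hd'] at ht
    have hab' : a * b' = A + d' ^ 2 := by rw [hb', hA, hd']; ring
    have hlt : b' < a := by
      by_contra hge
      have h5 : a * a ≤ a * b' := mul_le_mul_of_nonneg_left (not_lt.mp hge) ha.le
      have h6 : 3 * a ^ 2 ≤ 4 * A := by nlinarith
      have h7 : (3 * a ^ 2) ^ 2 ≤ (4 * A) ^ 2 := pow_le_pow_left₀ (by positivity) h6 2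
      have h8 : a * (27 * a ^ 3) ≤ a * 64 := by nlinarith
      have h9 : 27 * a ^ 3 ≤ 64 := le_of_mul_le_mul_left h8 ha
      have h10 : 2 ≤ a := by omega
      have h11 : 2 ^ 3 ≤ a ^ 3 := pow_le_pow_left₀ (by norm_num) h10 3
      linarith
    have hbpos : 0 < b' := by
      have : 0 < a * b' := by rw [hab']; positivity
      exact pos_of_mul_pos_right this ha.le
    obtain ⟨Y, hY⟩ : ∃ Y, Y = s * y - q * z := ⟨_, rfl⟩
    obtain ⟨Z, hZ⟩ : ∃ Z, Z = -r * y + p * z := ⟨_, rfl⟩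
    obtain ⟨X, hX⟩ : ∃ X, X = x - t * Y := ⟨_, rfl⟩
    have hy : y = p * Y + q * Z := by rw [hY, hZ]; linear_combination (-y) * h1
    have hz : z = r * Y + s * Z := by rw [hY, hZ]; linear_combination (-z) * h1
    have hx : x = X + t * Y := by rw [hX]; ring
    clear hY hZ hX
    subst hy hz hx
    obtain ⟨u, v, w, huvw⟩ := ih b'.toNat (by omega) b' a
      (b * q ^ 2 + 2 * f * q * s + c * s ^ 2) d'
      (b * p * q + f * (p * s + q * r) + c * r * s + t * (d * q + e * s)) (d * q + e * s)
      rfl hbpos (by linarith) (by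
        rw [hb', hd']
        linear_combination (p * s - q * r) ^ 2 * hdet + (p * s - q * r + 1) * h1) Y X Z
    refine ⟨u, v, w, ?_⟩
    rw [← huvw, hb', hd']
    ring

open NumberTheorySymbols in
/-- Every number congruent to 3 mod 8 is a sum of three squares. -/
lemma three_squares (n : ℕ) : ∃ u v w : ℤ, 8 * (n : ℤ) + 3 = u ^ 2 + v ^ 2 + w ^ 2 := by
  have hcop : (4 * n + 1).Coprime (4 * (8 * n + 3)) := by
    have h4 : (4 * n + 1).Coprime 4 := by simp
    have h5 : (4 * n + 1).Coprime (8 * n + 3) := by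
      have : 8 * n + 3 = 1 + (4 * n + 1) * 2 := by ring
      rw [this, Nat.coprime_add_mul_left_right]
      exact Nat.coprime_one_right _
    exact h4.mul_right h5
  obtain ⟨p, hpgt, hp, hmod⟩ :=
    Nat.forall_exists_prime_gt_and_modEq (4 * n + 1) (by omega) hcop
  obtain ⟨j, hj⟩ := (Nat.modEq_iff_dvd' hpgt.le).mp hmod.symm
  have hpj : p = 4 * n + 1 + 4 * (8 * n + 3) * j := by omega
  have : Fact p.Prime := ⟨hp⟩
  obtain ⟨b, hb⟩ : ∃ b : ℕ, b = 8 * j + 1 := ⟨_, rfl⟩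
  have h2p : 2 * p + 1 = b * (8 * n + 3) := by rw [hpj, hb]; ring
  have hp4 : p % 4 = 1 := by
    rw [hpj, mul_assoc]; omega
  have hbodd : Odd b := ⟨4 * j, by omega⟩
  have hpodd : Odd p := Nat.odd_iff.mpr (by omega)
  have hJ2 : J(-2 | b) = 1 := by
    rw [jacobiSym.at_neg_two hbodd, ZMod.χ₈'_nat_eq_if_mod_eight]
    have h8 : b % 8 = 1 := by omega
    have h2 : b % 2 = 1 := by omega
    simp [h8, h2]
  have hJ : J(-(b : ℤ) | p) = 1 := by
    rw [jacobiSym.neg _ hpodd, ZMod.χ₄_nat_one_mod_four hp4, one_mul,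
      jacobiSym.quadratic_reciprocity_one_mod_four' hbodd hp4]
    have h3 : J(-2 * (p : ℤ) | b) = J(1 | b) := by
      apply jacobiSym.mod_left'
      have : -2 * (p : ℤ) = 1 + b * (-(8 * n + 3)) := by
        have : (2 * p + 1 : ℤ) = b * (8 * n + 3) := by exact_mod_cast h2p
        linear_combination -this
      rw [this, Int.add_mul_emod_self_left]
    rwa [jacobiSym.mul_left, hJ2, one_mul, jacobiSym.one_left] at h3
  obtain ⟨g, hg⟩ := ZMod.isSquare_of_jacobiSym_eq_one hJ
  have hdvd : (p : ℤ) ∣ (g.val : ℤ) ^ 2 + b := by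
    rw [← ZMod.intCast_zmod_eq_zero_iff_dvd]
    push_cast at hg ⊢
    rw [ZMod.natCast_zmod_val, sq, ← hg]
    ring
  -- make the root odd
  obtain ⟨x, hx, hxodd⟩ : ∃ x : ℤ, (p : ℤ) ∣ x ^ 2 + b ∧ x % 2 = 1 := by
    rcases Int.emod_two_eq_zero_or_one (g.val : ℤ) with h | h
    · refine ⟨g.val + p, ?_, by omega⟩
      have : ((g.val : ℤ) + p) ^ 2 + b = ((g.val : ℤ) ^ 2 + b) + p * (2 * g.val + p) := by ring
      rw [this]
      exact dvd_add hdvd (dvd_mul_right _ _)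
    · exact ⟨_, hdvd, h⟩
  obtain ⟨c, hc⟩ := hx
  have hceven : ∃ a : ℤ, c = 2 * a := by
    have hb2 : Odd (b : ℤ) := by exact_mod_cast hbodd
    have hp2 : Odd (p : ℤ) := by exact_mod_cast hpodd
    have hx2 : Odd x := Int.odd_iff.mpr hxodd
    have : Even ((p : ℤ) * c) := by rw [← hc]; exact (hx2.pow).add_odd hb2
    rcases Int.even_mul.mp this with h | h
    · exact absurd h (Int.not_even_iff_odd.mpr hp2)
    · obtain ⟨a, ha⟩ := h
      exact ⟨a, by omega⟩
  obtain ⟨a, rfl⟩ := hceven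
  have hbpos : (0 : ℤ) < b := by exact_mod_cast hbodd.pos
  have hppos : (0 : ℤ) < p := by exact_mod_cast hp.pos
  have hapos : 0 < a := by
    have : 0 < (p : ℤ) * (2 * a) := by rw [← hc]; positivity
    have := pos_of_mul_pos_right this hppos.le
    omega
  have h2p' : (2 * p + 1 : ℤ) = b * (8 * n + 3) := by exact_mod_cast h2p
  obtain ⟨u, v, w, h⟩ := ternary_unimodular _ a (2 * p) (8 * n + 3) x 1 0 rfl hapos
    (by have : a * (2 * p) - x ^ 2 = b := by linear_combination -hc
        rw [this]; exact hbpos)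
    (by linear_combination -(8 * (n : ℤ) + 3) * hc - h2p') 0 0 1
  exact ⟨u, v, w, by rw [← h]; ring⟩

lemma odd_sq_triangular (u : ℤ) (h : u % 2 = 1) :
    ∃ a : ℕ, u ^ 2 = 8 * ((a * (a + 1) / 2 : ℕ) : ℤ) + 1 := by
  refine ⟨u.natAbs / 2, ?_⟩
  obtain ⟨a, ha⟩ : ∃ a, a = u.natAbs / 2 := ⟨_, rfl⟩
  have h1 : u.natAbs = 2 * a + 1 := by omega
  rw [← ha]
  have h2 : 2 * (a * (a + 1) / 2) = a * (a + 1) :=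
    Nat.mul_div_cancel' (Nat.even_mul_succ_self a).two_dvd
  have h3 : (2 * ((a * (a + 1) / 2 : ℕ) : ℤ)) = a * (a + 1) := by exact_mod_cast h2
  rw [← Int.natAbs_sq, h1]
  push_cast at h3 ⊢
  linear_combination -4 * h3

theorem gauss_three_triangular (n : ℕ) :
    ∃ a b c : ℕ, a * (a + 1) / 2 + b * (b + 1) / 2 + c * (c + 1) / 2 = n := by
  obtain ⟨u, v, w, h⟩ := three_squares n
  have key : ∀ x : ℤ, (x % 2 = 1 ∧ x ^ 2 % 8 = 1) ∨ (x % 2 = 0 ∧ (x ^ 2 % 8 = 0 ∨ x ^ 2 % 8 = 4)) := by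
    intro x
    have : x % 8 = 0 ∨ x % 8 = 1 ∨ x % 8 = 2 ∨ x % 8 = 3 ∨ x % 8 = 4 ∨ x % 8 = 5 ∨ x % 8 = 6 ∨
      x % 8 = 7 := by omega
    rcases this with h | h | h | h | h | h | h | h <;>
      rw [sq, Int.mul_emod, h] <;> norm_num <;> omega
  have hu := key u
  have hv := key v
  have hw := key w
  obtain ⟨a, ha⟩ := odd_sq_triangular u (by omega)
  obtain ⟨b, hb⟩ := odd_sq_triangular v (by omega)
  obtain ⟨c, hc⟩ := odd_sq_triangular w (by omega)
  exact ⟨a, b, c, by omega⟩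
end

section
/- For all n ≥ 0, P^3_3(27n + 12) = 3 · P^3_3(3n + 1), where P^3_3(m) is the number of partitions of m into three triangular numbers (Hirschhorn–Sellers identity cited in the paper). -/
/-- The k-th triangular number. -/
def tri (k : ℕ) : ℕ := k * (k + 1) / 2

/-- Number of partitions of m into three triangular numbers (unordered,
counted via normalized triples a ≥ b ≥ c ≥ 0). -/
noncomputable def P33 (m : ℕ) : ℕ :=
  Set.ncard {x : ℕ × ℕ × ℕ | x.2.1 ≤ x.1 ∧ x.2.2 ≤ x.2.1 ∧
    tri x.1 + tri x.2.1 + tri x.2.2 = m}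

/-- Multisets of three indices whose triangular numbers sum to `m`. -/
def MM (m : ℕ) : Set (Multiset ℕ) :=
  {s | ∃ x y z : ℕ, s = {x, y, z} ∧ x * (x + 1) + y * (y + 1) + z * (z + 1) = 2 * m}

theorem two_tri (k : ℕ) : 2 * tri k = k * (k + 1) := by
  unfold tri
  exact Nat.mul_div_cancel' (Nat.even_mul_succ_self k).two_dvd

theorem triple_eq {x y z a b c : ℕ} (h : ({x, y, z} : Multiset ℕ) = {a, b, c}) :
    (x = a ∧ y = b ∧ z = c) ∨ (x = a ∧ y = c ∧ z = b) ∨ (x = b ∧ y = a ∧ z = c) ∨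
    (x = b ∧ y = c ∧ z = a) ∨ (x = c ∧ y = a ∧ z = b) ∨ (x = c ∧ y = b ∧ z = a) := by
  have hx : x ∈ ({a, b, c} : Multiset ℕ) := by rw [← h]; simp
  have pair : ∀ {p q r s : ℕ}, ({p, q} : Multiset ℕ) = {r, s} →
      (p = r ∧ q = s) ∨ (p = s ∧ q = r) := by
    intro p q r s h
    have hp : p ∈ ({r, s} : Multiset ℕ) := by rw [← h]; simp
    have hs : p + q = r + s := by simpa using congrArg Multiset.sum h
    simp at hp
    omega
  simp at hx
  rcases hx with rfl | rfl | rfl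
  · have := pair ((Multiset.cons_inj_right x).1 h); tauto
  · rw [show ({a, x, c} : Multiset ℕ) = {x, a, c} from Multiset.cons_swap _ _ _] at h
    have := pair ((Multiset.cons_inj_right x).1 h); tauto
  · rw [show ({a, b, x} : Multiset ℕ) = {x, a, b} by
      rw [show ({a, b, x} : Multiset ℕ) = {a, x, b} from
        congrArg (a ::ₘ ·) (Multiset.cons_swap b x 0)]
      exact Multiset.cons_swap _ _ _] at h
    have := pair ((Multiset.cons_inj_right x).1 h); tauto

theorem sw12 (x y z : ℕ) : ({x, y, z} : Multiset ℕ) = {y, x, z} := Multiset.cons_swap _ _ _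
theorem sw23 (x y z : ℕ) : ({x, y, z} : Multiset ℕ) = {x, z, y} :=
  congrArg (x ::ₘ ·) (Multiset.cons_swap y z 0)

theorem P33_eq (m : ℕ) : P33 m = (MM m).ncard := by
  unfold P33
  have himg : MM m = (fun x : ℕ × ℕ × ℕ => ({x.1, x.2.1, x.2.2} : Multiset ℕ)) ''
      {x : ℕ × ℕ × ℕ | x.2.1 ≤ x.1 ∧ x.2.2 ≤ x.2.1 ∧ tri x.1 + tri x.2.1 + tri x.2.2 = m} := by
    ext s
    constructor
    · rintro ⟨x, y, z, rfl, h⟩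
      rw [← two_tri, ← two_tri, ← two_tri] at h
      rcases le_total x y with h1 | h1 <;> rcases le_total y z with h2 | h2 <;>
        rcases le_total x z with h3 | h3
      · exact ⟨(z, y, x), ⟨h2, h1, by simp only; omega⟩, by
          simp only; rw [sw12, sw23, sw12]⟩
      · exact ⟨(z, y, x), ⟨h2, h1, by simp only; omega⟩, by
          simp only; rw [sw12, sw23, sw12]⟩
      · exact ⟨(y, z, x), ⟨h2, h3, by simp only; omega⟩, by
          simp only; rw [sw23, sw12]⟩
      · exact ⟨(y, x, z), ⟨h1, h3, by simp only; omega⟩, by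
          simp only; rw [sw12]⟩
      · exact ⟨(z, x, y), ⟨h3, h1, by simp only; omega⟩, by
          simp only; rw [sw12, sw23]⟩
      · exact ⟨(x, z, y), ⟨h3, h2, by simp only; omega⟩, by
          simp only; rw [sw23]⟩
      · exact ⟨(x, y, z), ⟨h1, h2, by simp only; omega⟩, rfl⟩
      · exact ⟨(x, y, z), ⟨h1, h2, by simp only; omega⟩, rfl⟩
    · rintro ⟨⟨x, y, z⟩, ⟨h1, h2, h⟩, rfl⟩
      refine ⟨x, y, z, rfl, ?_⟩
      simp only at h
      rw [← two_tri, ← two_tri, ← two_tri]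
      omega
  rw [himg, Set.ncard_image_of_injOn]
  rintro ⟨x, y, z⟩ ⟨h1, h2, -⟩ ⟨a, b, c⟩ ⟨h3, h4, -⟩ h
  have := triple_eq h
  simp only [Prod.mk.injEq] at *
  omega

/-- The natural index not congruent to 1 mod 3 attached to an integer. -/
def nn (i : ℤ) : ℕ := if 0 ≤ i then (3 * i).toNat else (-1 - 3 * i).toNat

theorem nn_spec (i : ℤ) : ((nn i : ℤ) = 3 * i ∧ 0 ≤ i) ∨ ((nn i : ℤ) = -1 - 3 * i ∧ i < 0) := by
  unfold nn; split_ifs <;> omega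

theorem nn_tri (i : ℤ) : ((nn i * (nn i + 1) : ℕ) : ℤ) = 3 * (3 * i ^ 2 + i) := by
  push_cast
  rcases nn_spec i with ⟨h, -⟩ | ⟨h, -⟩ <;> rw [h] <;> ring

theorem nn_inj {i j : ℤ} (h : nn i = nn j) : i = j := by
  have := nn_spec i; have := nn_spec j; omega

theorem nn_mod (i : ℤ) (c : ℕ) : nn i ≠ 3 * c + 1 := by
  have := nn_spec i; omega

theorem nn_cases (k : ℕ) : (∃ c, k = 3 * c + 1) ∨ ∃ i, k = nn i := by
  by_cases h : k % 3 = 1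
  · exact Or.inl ⟨k / 3, by omega⟩
  · by_cases h0 : k % 3 = 0
    · refine Or.inr ⟨(k / 3 : ℕ), ?_⟩
      have := nn_spec (k / 3 : ℕ); omega
    · refine Or.inr ⟨-1 - (k / 3 : ℕ), ?_⟩
      have := nn_spec (-1 - (k / 3 : ℕ)); omega

theorem one_tri (c : ℕ) : (((3 * c + 1) * (3 * c + 1 + 1) : ℕ) : ℤ) = 9 * (c ^ 2 + c) + 2 := by
  push_cast; ring

/-- Parameter set with integral third coordinate. -/
def AZ (n : ℕ) : Set (ℤ × ℤ × ℤ) :=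
  {p | p.1 ≤ p.2.1 ∧
    3 * p.1 ^ 2 + p.1 + (3 * p.2.1 ^ 2 + p.2.1) + 3 * (p.2.2 ^ 2 + p.2.2) = 2 * n}

/-- Parameter set with natural third coordinate. -/
def AN (n : ℕ) : Set (ℤ × ℤ × ℕ) :=
  {p | p.1 ≤ p.2.1 ∧
    3 * p.1 ^ 2 + p.1 + (3 * p.2.1 ^ 2 + p.2.1) + 3 * ((p.2.2 : ℤ) ^ 2 + p.2.2) = 2 * n}

theorem AZ_card (n : ℕ) : (AZ n).encard = 2 * (AN n).encard := by
  have h : AZ n = (fun p : ℤ × ℤ × ℕ => ((p.1, p.2.1, (p.2.2 : ℤ)) : ℤ × ℤ × ℤ)) '' AN n ∪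
      (fun p : ℤ × ℤ × ℕ => ((p.1, p.2.1, -1 - (p.2.2 : ℤ)) : ℤ × ℤ × ℤ)) '' AN n := by
    ext ⟨i, j, c⟩
    constructor
    · rintro ⟨h1, h2⟩
      simp only at h1 h2
      rcases le_or_gt 0 c with hc | hc
      · lift c to ℕ using hc
        exact Or.inl ⟨(i, j, c), ⟨h1, h2⟩, rfl⟩
      · obtain ⟨d, hd⟩ := Int.eq_ofNat_of_zero_le (show 0 ≤ -1 - c by omega)
        obtain rfl : c = -1 - d := by omega
        exact Or.inr ⟨(i, j, d), ⟨h1, by simp only; linarith⟩, rfl⟩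
    · rintro (⟨⟨a, b, d⟩, ⟨h1, h2⟩, h3⟩ | ⟨⟨a, b, d⟩, ⟨h1, h2⟩, h3⟩) <;>
      · simp only [Prod.mk.injEq] at h1 h2 h3
        obtain ⟨rfl, rfl, rfl⟩ := h3
        exact ⟨h1, by simp only; linarith⟩
  rw [h, Set.encard_union_eq, Set.InjOn.encard_image, Set.InjOn.encard_image, two_mul]
  · rintro ⟨a, b, c⟩ - ⟨d, e, f⟩ - h
    simp only [Prod.mk.injEq] at *
    omega
  · rintro ⟨a, b, c⟩ - ⟨d, e, f⟩ - h
    simp only [Prod.mk.injEq] at *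
    omega
  · rw [Set.disjoint_left]
    rintro _ ⟨⟨a, b, c⟩, -, rfl⟩ ⟨⟨d, e, f⟩, -, h⟩
    simp only [Prod.mk.injEq] at h
    omega

theorem MM_small (n : ℕ) : (MM (3 * n + 1)).encard = (AN n).encard := by
  have h : MM (3 * n + 1) =
      (fun p : ℤ × ℤ × ℕ => ({nn p.1, nn p.2.1, 3 * p.2.2 + 1} : Multiset ℕ)) '' AN n := by
    have key : ∀ (i j : ℤ) (c : ℕ), nn i * (nn i + 1) + nn j * (nn j + 1) +
        (3 * c + 1) * (3 * c + 1 + 1) = 2 * (3 * n + 1) →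
        ({nn i, nn j, 3 * c + 1} : Multiset ℕ) ∈
        (fun p : ℤ × ℤ × ℕ => ({nn p.1, nn p.2.1, 3 * p.2.2 + 1} : Multiset ℕ)) '' AN n := by
      intro i j c h
      have h1 := nn_tri i
      have h2 := nn_tri j
      have h3 := one_tri c
      rcases le_total i j with hij | hij
      · exact ⟨(i, j, c), ⟨hij, by simp only; omega⟩, rfl⟩
      · exact ⟨(j, i, c), ⟨hij, by simp only; omega⟩, sw12 _ _ _⟩
    ext s
    constructor
    · rintro ⟨x, y, z, rfl, h⟩
      rcases nn_cases x with ⟨a, rfl⟩ | ⟨a, rfl⟩ <;> rcases nn_cases y with ⟨b, rfl⟩ | ⟨b, rfl⟩ <;>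
        rcases nn_cases z with ⟨c, rfl⟩ | ⟨c, rfl⟩
      · have := one_tri a; have := one_tri b; have := one_tri c; omega
      · have := one_tri a; have := one_tri b; have := nn_tri c; omega
      · have := one_tri a; have := nn_tri b; have := one_tri c; omega
      · rw [sw12, sw23]; exact key _ _ _ (by omega)
      · have := nn_tri a; have := one_tri b; have := one_tri c; omega
      · rw [sw23]; exact key _ _ _ (by omega)
      · exact key _ _ _ (by omega)
      · have := nn_tri a; have := nn_tri b; have := nn_tri c; omega
    · rintro ⟨⟨i, j, c⟩, ⟨h1, h2⟩, rfl⟩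
      refine ⟨_, _, _, rfl, ?_⟩
      have := nn_tri i
      have := nn_tri j
      have := one_tri c
      simp only at *
      omega
  rw [h, Set.InjOn.encard_image]
  rintro ⟨a, b, c⟩ ⟨h1, -⟩ ⟨d, e, f⟩ ⟨h2, -⟩ h
  have h3 := triple_eq h
  have := nn_spec a
  have := nn_spec b
  have := nn_spec d
  have := nn_spec e
  simp only [Prod.mk.injEq] at *
  omega

/-- The Hecke-type map. -/
def hk (p : ℤ × ℤ × ℤ) : Multiset ℕ :=
  {nn (2 * p.2.1 + 2 * p.2.2 - p.1 + 1), nn (2 * p.1 + 2 * p.2.2 - p.2.1 + 1),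
    nn (2 * p.1 + 2 * p.2.1 - p.2.2)}

set_option maxHeartbeats 2000000 in
theorem arith_key (x y z n : ℤ)
    (h : 3 * x ^ 2 + x + (3 * y ^ 2 + y) + (3 * z ^ 2 + z) = 18 * n + 8) :
    ∃ T, x + y + z = 3 * T + 2 ∧
      (((2 * T - z) % 3 = 0 ∧ (2 * T + 1 - x) % 3 = 0 ∧ (2 * T + 1 - y) % 3 = 0) ∨
       ((2 * T - y) % 3 = 0 ∧ (2 * T + 1 - x) % 3 = 0 ∧ (2 * T + 1 - z) % 3 = 0) ∨
       ((2 * T - x) % 3 = 0 ∧ (2 * T + 1 - y) % 3 = 0 ∧ (2 * T + 1 - z) % 3 = 0)) := by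
  have sq : ∀ x : ℤ, (x % 3 = 0 ∧ x ^ 2 % 3 = 0) ∨ (x % 3 = 1 ∧ x ^ 2 % 3 = 1) ∨
      (x % 3 = 2 ∧ x ^ 2 % 3 = 1) := by
    intro x
    have : x % 3 = 0 ∨ x % 3 = 1 ∨ x % 3 = 2 := by omega
    rcases this with h | h | h <;> simp [h, pow_two, Int.mul_emod]
  have hx := sq x
  have hy := sq y
  have hz := sq z
  generalize x ^ 2 = X at *
  generalize y ^ 2 = Y at *
  generalize z ^ 2 = Z at *
  clear sq
  obtain ⟨T, hT⟩ : ∃ T, x + y + z = 3 * T + 2 := ⟨(x + y + z - 2) / 3, by omega⟩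
  refine ⟨T, hT, ?_⟩
  have hq : (X + Y + Z + T) % 3 = 2 := by omega
  clear h
  rcases hx with hx | hx | hx <;> rcases hy with hy | hy | hy <;> rcases hz with hz | hz | hz <;>
    first
    | (exfalso; clear hq; omega)
    | (left; refine ⟨?_, ?_, ?_⟩ <;> omega)
    | (right; left; refine ⟨?_, ?_, ?_⟩ <;> omega)
    | (right; right; refine ⟨?_, ?_, ?_⟩ <;> omega)

theorem hk_key (x y z : ℤ) (n : ℕ)
    (h : 3 * x ^ 2 + x + (3 * y ^ 2 + y) + (3 * z ^ 2 + z) = 18 * n + 8) (T : ℤ)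
    (hT : x + y + z = 3 * T + 2) (h1 : (2 * T - z) % 3 = 0) (h2 : (2 * T + 1 - x) % 3 = 0)
    (h3 : (2 * T + 1 - y) % 3 = 0) : ({nn x, nn y, nn z} : Multiset ℕ) ∈ hk '' AZ n := by
  obtain ⟨c, hc⟩ := Int.dvd_of_emod_eq_zero h1
  obtain ⟨i, hi⟩ := Int.dvd_of_emod_eq_zero h2
  obtain ⟨j, hj⟩ := Int.dvd_of_emod_eq_zero h3
  obtain rfl : x = 2 * j + 2 * c - i + 1 := by omega
  obtain rfl : y = 2 * i + 2 * c - j + 1 := by omega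
  obtain rfl : z = 2 * i + 2 * j - c := by omega
  rcases le_total i j with hij | hij
  · exact ⟨(i, j, c), ⟨hij, by simp only; linarith⟩, rfl⟩
  · refine ⟨(j, i, c), ⟨hij, by simp only; linarith⟩, ?_⟩
    simp only [hk]
    rw [sw12, add_comm (2 * j) (2 * i)]

theorem hk_inj (n : ℕ) : Set.InjOn hk (AZ n) := by
  rintro ⟨a, b, c⟩ ⟨h1, -⟩ ⟨d, e, f⟩ ⟨h2, -⟩ h
  have h3 := triple_eq h
  simp only [Prod.mk.injEq] at *
  rcases h3 with ⟨p, q, r⟩ | ⟨p, q, r⟩ | ⟨p, q, r⟩ | ⟨p, q, r⟩ | ⟨p, q, r⟩ | ⟨p, q, r⟩ <;>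
  · have p := nn_inj p
    have q := nn_inj q
    have r := nn_inj r
    omega

theorem MM_big (n : ℕ) :
    (MM (27 * n + 12)).encard = (MM (3 * n + 1)).encard + (AZ n).encard := by
  have hinj : Function.Injective (fun k : ℕ => 3 * k + 1) := by
    intro a b h; simp only at h; omega
  have h : MM (27 * n + 12) =
      Multiset.map (fun k : ℕ => 3 * k + 1) '' MM (3 * n + 1) ∪ hk '' AZ n := by
    ext s
    constructor
    · rintro ⟨x, y, z, rfl, h⟩
      rcases nn_cases x with ⟨a, rfl⟩ | ⟨a, rfl⟩ <;> rcases nn_cases y with ⟨b, rfl⟩ | ⟨b, rfl⟩ <;>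
        rcases nn_cases z with ⟨c, rfl⟩ | ⟨c, rfl⟩
      · left
        exact ⟨{a, b, c}, ⟨a, b, c, rfl, by linarith⟩, by simp⟩
      · have := one_tri a; have := one_tri b; have := nn_tri c; omega
      · have := one_tri a; have := nn_tri b; have := one_tri c; omega
      · have := one_tri a; have := nn_tri b; have := nn_tri c; omega
      · have := nn_tri a; have := one_tri b; have := one_tri c; omega
      · have := nn_tri a; have := one_tri b; have := nn_tri c; omega
      · have := nn_tri a; have := nn_tri b; have := one_tri c; omega
      · right
        have ha := nn_tri a
        have hb := nn_tri b
        have hc := nn_tri c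
        have e : 3 * a ^ 2 + a + (3 * b ^ 2 + b) + (3 * c ^ 2 + c) = 18 * n + 8 := by omega
        obtain ⟨T, hT, h | h | h⟩ := arith_key a b c n e
        · exact hk_key a b c n e T hT h.1 h.2.1 h.2.2
        · rw [sw23]
          exact hk_key a c b n (by linarith) T (by linarith) h.1 h.2.1 h.2.2
        · rw [sw12, sw23]
          exact hk_key b c a n (by linarith) T (by linarith) h.1 h.2.1 h.2.2
    · rintro (⟨_, ⟨x, y, z, rfl, h⟩, rfl⟩ | ⟨⟨i, j, c⟩, ⟨h1, h2⟩, rfl⟩)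
      · exact ⟨3 * x + 1, 3 * y + 1, 3 * z + 1, by simp, by linarith⟩
      · refine ⟨_, _, _, rfl, ?_⟩
        zify
        have e1 := nn_tri (2 * j + 2 * c - i + 1)
        have e2 := nn_tri (2 * i + 2 * c - j + 1)
        have e3 := nn_tri (2 * i + 2 * j - c)
        push_cast at e1 e2 e3
        simp only at h2 ⊢
        rw [e1, e2, e3]
        linarith
  rw [h, Set.encard_union_eq, (Multiset.map_injective hinj).encard_image,
    (hk_inj n).encard_image]
  rw [Set.disjoint_left]
  rintro _ ⟨_, ⟨x, y, z, rfl, -⟩, rfl⟩ ⟨p, -, h⟩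
  have : nn (2 * p.1 + 2 * p.2.1 - p.2.2) ∈
      Multiset.map (fun k : ℕ => 3 * k + 1) {x, y, z} := by
    rw [← h]; simp [hk]
  obtain ⟨k, -, hk'⟩ := Multiset.mem_map.1 this
  exact nn_mod _ _ hk'.symm

theorem hirschhorn_sellers (n : ℕ) : P33 (27 * n + 12) = 3 * P33 (3 * n + 1) := by
  rw [P33_eq, P33_eq, Set.ncard_def, Set.ncard_def, MM_big, AZ_card, ← MM_small]
  have : (MM (3 * n + 1)).encard + 2 * (MM (3 * n + 1)).encard
      = 3 * (MM (3 * n + 1)).encard := by ring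
  rw [this, ENat.toNat_mul]
  rfl
end
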